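/- Let 𝐫 = ((r_1,s_1),…,(r_v,s_v)) and 𝐭 = ((t_1,u_1),…,(t_w,u_w)) be vectors of pairs of integers with all s_i, u_j ≠ 0, all t_j/u_j ∉ ℤ_{≤0} (so that (Q_{𝐫,𝐭}(q; n))_{n≥0} is well-defined) and all r_i/s_i ∉ ℤ_{≤0} (so that the sequence is not eventually zero). Then the following are equivalent: (i) there exists C(q) ∈ ℤ[q] ∖ {0} such that C(q)^n · Q_{𝐫,𝐭}(q; n) ∈ ℤ[q^{−1}, q] for every n ≥ 0; (ii) for every b ∈ {1, …, d_{𝐫,𝐭}} and all x ∈ ℝ, Ξ_{𝐫,𝐭}(b, x) ≥ 0. -/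

import Mathlib

open Polynomial
open scoped Classical

noncomputable section

/-- The generalized Dwork map `D_b(α)`: the unique rational whose reduced denominator is
coprime to `b` and such that `b·D_b(α) − α ∈ {0, 1, …, b−1}`. -/
def dwork (b : ℕ) (α : ℚ) : ℚ :=
  if h : ∃ θ : ℚ, Nat.Coprime θ.den b ∧ ∃ k : ℤ, 0 ≤ k ∧ k < (b : ℤ) ∧ (b : ℚ) * θ - α = (k : ℚ)
  then h.choose else 0

/-- `α ∈ ℤ_{≤0}`. -/
def IsNonPosInt (α : ℚ) : Prop := ∃ m : ℤ, m ≤ 0 ∧ α = (m : ℚ)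

/-- `α ∈ ℤ_{>0}`. -/
def IsPosInt (α : ℚ) : Prop := ∃ m : ℤ, 0 < m ∧ α = (m : ℚ)

/-- `𝔫_α`. -/
def frakn (α : ℚ) : ℤ := if 0 ≤ α then α.num else |α.num| + 1

/-- `⟨x⟩`: the fractional part of `x` if `x ∉ ℤ`, and `1` if `x ∈ ℤ`. -/
def cangle (x : ℝ) : ℝ := if ∃ m : ℤ, x = (m : ℝ) then 1 else Int.fract x

/-- Christol order `x ⪯ y`. -/
def cle (x y : ℝ) : Prop := cangle x < cangle y ∨ (cangle x = cangle y ∧ y ≤ x)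

/-- The step function `δ_b(r, s, ·)`. -/
def qdelta (b : ℕ) (r s : ℤ) (x : ℝ) : ℤ :=
  if Int.gcd (s / (Nat.gcd (Int.gcd r s) b : ℤ)) (((b / Nat.gcd (Int.gcd r s) b : ℕ)) : ℤ) = 1 then
    ⌊(Nat.gcd (Int.gcd r s) b : ℝ) * x
        - ((dwork (b / Nat.gcd (Int.gcd r s) b) ((r : ℚ) / (s : ℚ)) : ℚ) : ℝ)
        - ((⌊1 - (r : ℚ) / (s : ℚ)⌋ : ℤ) : ℝ) / ((b / Nat.gcd (Int.gcd r s) b : ℕ) : ℝ)⌋ + 1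
  else 0

/-- The Landau-type step function `Δ_b^{𝐫,𝐭}`. -/
def qDeltaFn {v w : ℕ} (b : ℕ) (rr : Fin v → ℤ × ℤ) (tt : Fin w → ℤ × ℤ) (x : ℝ) : ℤ :=
  (∑ i, qdelta b (rr i).1 (rr i).2 x) - (∑ j, qdelta b (tt j).1 (tt j).2 x)

/-- The q-Pochhammer symbol `(q^r; q^s)_n` for `n ∈ ℕ`, inside `ℚ(q)`. -/
def qPoch (r s : ℤ) (n : ℕ) : RatFunc ℚ :=
  ∏ i ∈ Finset.range n, (1 - RatFunc.X ^ (r + s * (i : ℤ)))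

/-- The q-Pochhammer symbol `(q^r; q^s)_n` for `n ∈ ℤ`. -/
def qPochZ (r s : ℤ) (n : ℤ) : RatFunc ℚ :=
  if 0 ≤ n then qPoch r s n.toNat else (qPoch (r - s) (-s) (-n).toNat)⁻¹

/-- Multiplicity of `p` in `g`: the largest `k` with `p^k ∣ g`. -/
def polyMult (p g : Polynomial ℚ) : ℕ := sSup {k : ℕ | p ^ k ∣ g}

/-- The valuation `v_{φ_b}` on `ℚ(q)` attached to the `b`-th cyclotomic polynomial. -/
def cycVal (b : ℕ) (f : RatFunc ℚ) : ℤ :=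
  (polyMult (cyclotomic b ℚ) f.num : ℤ) - (polyMult (cyclotomic b ℚ) f.denom : ℤ)

/-- The image of an integer polynomial in `ℚ(q)`. -/
def polyZ (g : Polynomial ℤ) : RatFunc ℚ :=
  algebraMap (Polynomial ℚ) (RatFunc ℚ) (g.map (Int.castRingHom ℚ))

/-- `f ∈ ℤ[q⁻¹, q]`. -/
def IsIntLaurent (f : RatFunc ℚ) : Prop :=
  ∃ (m : ℕ) (g : Polynomial ℤ), f * RatFunc.X ^ m = polyZ g

/-- `f ∈ ℤ[q]`. -/
def IsIntPoly (f : RatFunc ℚ) : Prop := ∃ g : Polynomial ℤ, f = polyZ g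

/-- The ratio attached to a pair of integers. -/
def ratOf (p : ℤ × ℤ) : ℚ := (p.1 : ℚ) / (p.2 : ℚ)

/-- The q-hypergeometric term `Q_{𝐫,𝐭}(q; n)`, `n ∈ ℕ`. -/
def qHyp {v w : ℕ} (rr : Fin v → ℤ × ℤ) (tt : Fin w → ℤ × ℤ) (n : ℕ) : RatFunc ℚ :=
  (∏ i, qPoch (rr i).1 (rr i).2 n) / (∏ j, qPoch (tt j).1 (tt j).2 n)

/-- The q-hypergeometric term `Q_{𝐫,𝐭}(q; n)`, `n ∈ ℤ`. -/
def qHypZ {v w : ℕ} (rr : Fin v → ℤ × ℤ) (tt : Fin w → ℤ × ℤ) (n : ℤ) : RatFunc ℚ :=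
  (∏ i, qPochZ (rr i).1 (rr i).2 n) / (∏ j, qPochZ (tt j).1 (tt j).2 n)

/-- `c := gcd(r, s, b)`. -/
def cOf (p : ℤ × ℤ) (b : ℕ) : ℕ := Nat.gcd (Int.gcd p.1 p.2) b

/-- Membership in `V_b` (resp. `W_b`): `gcd(s, b) = gcd(r, s, b)`. -/
def inV (p : ℤ × ℤ) (b : ℕ) : Prop := Nat.gcd p.2.natAbs b = cOf p b

/-- `d_{𝐫,𝐭}`: the lcm of all the `s_i` and `u_j`. -/
def dRT {v w : ℕ} (rr : Fin v → ℤ × ℤ) (tt : Fin w → ℤ × ℤ) : ℕ :=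
  Nat.lcm (Finset.univ.lcm fun i => ((rr i).2).natAbs)
    (Finset.univ.lcm fun j => ((tt j).2).natAbs)

/-- `b̃`: the greatest divisor of `b` coprime to `d`. -/
def btilde (d b : ℕ) : ℕ := Nat.findGreatest (fun k => k ∣ b ∧ Nat.Coprime k d) b

/-- The unique `a ∈ {1,…,d}` with `a·b̃ ≡ 1 (mod d)`. -/
def aOf (d b : ℕ) : ℕ :=
  if h : ∃ a, 1 ≤ a ∧ a ≤ d ∧ (a * btilde d b) % d = 1 % d then h.choose else 1

/-- The representative of `b` modulo `d` lying in `{1,…,d}`. -/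
def repMod (d b : ℕ) : ℕ := if b % d = 0 then d else b % d

/-- The jump abscissa `(⟨e·α⟩ + k)/c − ⌊1 − a·α⌋`. -/
def jumpPt (p : ℤ × ℤ) (b : ℕ) (a ei : ℤ) (k : ℕ) : ℝ :=
  (cangle (((ei : ℚ) * ratOf p : ℚ) : ℝ) + (k : ℝ)) / (cOf p b : ℝ)
    - ((⌊1 - (a : ℚ) * ratOf p⌋ : ℤ) : ℝ)

/-- Number of pairs `(i,k)` with jump abscissa `⪯ x` coming from one pair `p`. -/
def XiCount (p : ℤ × ℤ) (b : ℕ) (a ei : ℤ) (x : ℝ) : ℕ :=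
  if inV p b then ((Finset.range (cOf p b)).filter fun k => cle (jumpPt p b a ei k) x).card else 0

/-- The generalized Christol step function `Ξ_{𝐫,𝐭}(b, ·)`, relative to choices `e`, `f`. -/
def Xi {v w : ℕ} (rr : Fin v → ℤ × ℤ) (tt : Fin w → ℤ × ℤ) (b : ℕ)
    (e : Fin v → ℤ) (f : Fin w → ℤ) (x : ℝ) : ℤ :=
  (∑ i, (XiCount (rr i) b ((aOf (dRT rr tt) b : ℕ) : ℤ) (e i) x : ℤ))
    - (∑ j, (XiCount (tt j) b ((aOf (dRT rr tt) b : ℕ) : ℤ) (f j) x : ℤ))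

/-- `ei` is an admissible choice for the pair `p` and `b`: positive with `b·ei ≡ c (mod s)`. -/
def goodChoice (p : ℤ × ℤ) (b : ℕ) (ei : ℤ) : Prop :=
  inV p b → 0 < ei ∧ p.2 ∣ ((b : ℤ) * ei - (cOf p b : ℤ))

end

/-- The number of `k < n` such that `b` divides `r + s k`. -/
def dvdCount (p : ℤ × ℤ) (b n : ℕ) : ℕ :=
  ((Finset.range n).filter fun k : ℕ => (b : ℤ) ∣ p.1 + p.2 * (k : ℤ)).card

lemma dvdCount_succ (p : ℤ × ℤ) (b n : ℕ) :
    dvdCount p b (n + 1)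
      = dvdCount p b n + if (b : ℤ) ∣ p.1 + p.2 * (n : ℤ) then 1 else 0 := by
  unfold dvdCount
  rw [Finset.range_add_one, Finset.filter_insert]
  split_ifs with h
  · rw [Finset.card_insert_of_notMem (by simp)]
  · simp

lemma dvdCount_le (p : ℤ × ℤ) (b n : ℕ) : dvdCount p b n ≤ n := by
  simpa [dvdCount] using Finset.card_filter_le (Finset.range n) _

/-- `polyZ` as a ring homomorphism. -/
noncomputable def polyZHom : Polynomial ℤ →+* RatFunc ℚ :=
  (algebraMap (Polynomial ℚ) (RatFunc ℚ)).comp (Polynomial.mapRingHom (Int.castRingHom ℚ))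

lemma polyZ_eq_polyZHom (g : Polynomial ℤ) : polyZ g = polyZHom g := rfl

lemma polyZHom_injective : Function.Injective polyZHom :=
  (RatFunc.algebraMap_injective ℚ).comp
    (Polynomial.map_injective _ (RingHom.injective_int (Int.castRingHom ℚ)))

lemma polyZHom_X : polyZHom X = RatFunc.X := by
  simp [polyZHom]

/-- The product of the powers `φ_b ^ N b` of cyclotomic polynomials, for `1 ≤ b ≤ L`. -/
noncomputable def cycProd (L : ℕ) (N : ℕ → ℕ) : Polynomial ℤ :=
  ∏ b ∈ Finset.Icc 1 L, cyclotomic b ℤ ^ N b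

lemma cycProd_add (L : ℕ) (M N : ℕ → ℕ) :
    cycProd L (fun b => M b + N b) = cycProd L M * cycProd L N := by
  simp [cycProd, pow_add, Finset.prod_mul_distrib]

lemma cycProd_ne_zero (L : ℕ) (N : ℕ → ℕ) : cycProd L N ≠ 0 :=
  Finset.prod_ne_zero_iff.2 fun b _ => pow_ne_zero _ (cyclotomic_ne_zero b ℤ)

lemma cycProd_dvd_eq_X_pow_sub_one {m L : ℕ} (hm : 0 < m) (hL : m ≤ L) :
    cycProd L (fun b => if b ∣ m then 1 else 0) = X ^ m - 1 := by
  rw [← prod_cyclotomic_eq_X_pow_sub_one hm, cycProd]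
  simp only [pow_ite, pow_one, pow_zero]
  rw [← Finset.prod_filter]
  refine Finset.prod_congr ?_ fun _ _ => rfl
  ext b
  simp only [Finset.mem_filter, Finset.mem_Icc, Nat.mem_divisors]
  constructor
  · rintro ⟨-, h⟩
    exact ⟨h, hm.ne'⟩
  · rintro ⟨h, -⟩
    exact ⟨⟨Nat.pos_of_dvd_of_pos h hm, (Nat.le_of_dvd hm h).trans hL⟩, h⟩

/-- `f` is, up to sign and a power of `q`, the product of the `φ_b ^ N b` with `1 ≤ b ≤ L`. -/
def IsCycProd (L : ℕ) (N : ℕ → ℕ) (f : RatFunc ℚ) : Prop :=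
  ∃ (k : ℕ) (u : ℤˣ), f * RatFunc.X ^ k = polyZHom (C (u : ℤ) * cycProd L N)

lemma isCycProd_one (L : ℕ) : IsCycProd L (fun _ => 0) 1 :=
  ⟨0, 1, by simp [cycProd]⟩

lemma IsCycProd.mul {L : ℕ} {M N : ℕ → ℕ} {f g : RatFunc ℚ} (hf : IsCycProd L M f)
    (hg : IsCycProd L N g) : IsCycProd L (fun b => M b + N b) (f * g) := by
  obtain ⟨k, u, h⟩ := hf
  obtain ⟨l, t, h'⟩ := hg
  refine ⟨k + l, u * t, ?_⟩
  rw [cycProd_add, pow_add, mul_mul_mul_comm, h, h', ← map_mul]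
  congr 1
  push_cast
  rw [C_mul]
  ring

lemma isCycProd_prod {ι : Type*} (S : Finset ι) {L : ℕ} {N : ι → ℕ → ℕ} {f : ι → RatFunc ℚ}
    (h : ∀ i ∈ S, IsCycProd L (N i) (f i)) :
    IsCycProd L (fun b => ∑ i ∈ S, N i b) (∏ i ∈ S, f i) := by
  induction S using Finset.induction_on with
  | empty => simpa using isCycProd_one L
  | insert i S hi ih =>
    simp only [Finset.prod_insert hi, Finset.sum_insert hi]
    exact (h i (by simp)).mul (ih fun j hj => h j (by simp [hj]))

lemma isCycProd_one_sub_zpow {m : ℤ} {L : ℕ} (hm : m ≠ 0) (hL : m.natAbs ≤ L) :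
    IsCycProd L (fun b => if (b : ℤ) ∣ m then 1 else 0) (1 - RatFunc.X ^ m) := by
  have hpos : 0 < m.natAbs := Int.natAbs_pos.2 hm
  have hfun : (fun b : ℕ => if (b : ℤ) ∣ m then 1 else 0)
      = fun b : ℕ => if b ∣ m.natAbs then 1 else 0 := by
    funext b
    simp only [Int.natCast_dvd]
  unfold IsCycProd
  rw [hfun, cycProd_dvd_eq_X_pow_sub_one hpos hL]
  have hX : (RatFunc.X : RatFunc ℚ) ≠ 0 := RatFunc.X_ne_zero
  obtain h | h := Int.natAbs_eq m
  · refine ⟨0, -1, ?_⟩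
    nth_rw 1 [h]
    rw [zpow_natCast]
    simp [polyZHom_X]
  · refine ⟨m.natAbs, 1, ?_⟩
    nth_rw 1 [h]
    rw [zpow_neg, zpow_natCast, sub_mul, inv_mul_cancel₀ (pow_ne_zero _ hX)]
    simp [polyZHom_X]

lemma eventually_isCycProd_qPoch (p : ℤ × ℤ) (hp : ∀ i : ℕ, p.1 + p.2 * (i : ℤ) ≠ 0) (n : ℕ) :
    ∀ᶠ L in Filter.atTop, IsCycProd L (fun b => dvdCount p b n) (qPoch p.1 p.2 n) := by
  induction n with
  | zero =>
    refine Filter.Eventually.of_forall fun L => ?_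
    simpa [dvdCount, qPoch] using isCycProd_one L
  | succ n ih =>
    filter_upwards [ih, Filter.eventually_ge_atTop (p.1 + p.2 * (n : ℤ)).natAbs] with L h1 h2
    simp only [dvdCount_succ, qPoch, Finset.prod_range_succ]
    exact h1.mul (isCycProd_one_sub_zpow (hp n) h2)

lemma ne_zero_of_not_isNonPosInt {p : ℤ × ℤ} (hs : p.2 ≠ 0) (hp : ¬ IsNonPosInt (ratOf p))
    (i : ℕ) : p.1 + p.2 * (i : ℤ) ≠ 0 := by
  intro h
  refine hp ⟨-i, by simp, ?_⟩
  have hs' : (p.2 : ℚ) ≠ 0 := by exact_mod_cast hs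
  have h' : (p.1 : ℚ) + p.2 * i = 0 := by exact_mod_cast h
  rw [ratOf, div_eq_iff hs']
  push_cast
  linarith

lemma eventually_isCycProd_prod_qPoch {v : ℕ} (rr : Fin v → ℤ × ℤ) (hs : ∀ i, (rr i).2 ≠ 0)
    (hr : ∀ i, ¬ IsNonPosInt (ratOf (rr i))) (n : ℕ) :
    ∀ᶠ L in Filter.atTop, IsCycProd L (fun b => ∑ i, dvdCount (rr i) b n)
      (∏ i, qPoch (rr i).1 (rr i).2 n) := by
  have h := Filter.eventually_all.2 fun i =>
    eventually_isCycProd_qPoch (rr i) (ne_zero_of_not_isNonPosInt (hs i) (hr i)) n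
  filter_upwards [h] with L hL
  exact isCycProd_prod _ fun i _ => hL i

/-- The roots of a nonzero polynomial include primitive `b`-th roots of unity
for finitely many `b` only. -/
lemma eventually_aeval_primitiveRoot_ne_zero {P : Polynomial ℤ} (hP : P ≠ 0) :
    ∀ᶠ b : ℕ in Filter.atTop, ∀ ζ : ℂ, IsPrimitiveRoot ζ b → aeval ζ P ≠ 0 := by
  have hfin : {b : ℕ | ∃ ζ : ℂ, IsPrimitiveRoot ζ b ∧ aeval ζ P = 0}.Finite := by
    refine ((P.rootSet_finite ℂ).image orderOf).subset ?_
    rintro b ⟨ζ, hζ, h0⟩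
    exact ⟨ζ, (mem_rootSet.2 ⟨hP, h0⟩), hζ.eq_orderOf.symm⟩
  rw [← Nat.cofinite_eq_atTop]
  filter_upwards [hfin.compl_mem_cofinite] with b hb ζ hζ h0
  exact hb ⟨ζ, hζ, h0⟩

lemma cycProd_eq_mul_erase {L b : ℕ} (N : ℕ → ℕ) (hb : 1 ≤ b) (hL : b ≤ L) :
    cycProd L N
      = cyclotomic b ℤ ^ N b * ∏ c ∈ (Finset.Icc 1 L).erase b, cyclotomic c ℤ ^ N c :=
  (Finset.mul_prod_erase _ _ (Finset.mem_Icc.2 ⟨hb, hL⟩)).symm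

lemma aeval_primitiveRoot_cyclotomic_eq_zero_iff {ζ : ℂ} {b c : ℕ} (hζ : IsPrimitiveRoot ζ b)
    (hc : 1 ≤ c) : aeval ζ (cyclotomic c ℤ) = 0 ↔ c = b := by
  have : NeZero (c : ℂ) := ⟨by exact_mod_cast (by omega : c ≠ 0)⟩
  rw [aeval_def, ← eval_map, map_cyclotomic, ← IsRoot.def, isRoot_cyclotomic_iff]
  exact ⟨fun h => h.unique hζ, fun h => h ▸ hζ⟩

lemma le_of_cycProd_mul_eq {L b : ℕ} {M N : ℕ → ℕ} {P g : Polynomial ℤ} {ζ : ℂ} {k l : ℕ}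
    {u t : ℤˣ} (hb : 1 ≤ b) (hL : b ≤ L) (hζ : IsPrimitiveRoot ζ b) (hP : aeval ζ P ≠ 0)
    (h : P * (C (u : ℤ) * cycProd L M) * X ^ k = g * (C (t : ℤ) * cycProd L N) * X ^ l) :
    N b ≤ M b := by
  by_contra! hlt
  obtain ⟨j, hj⟩ := Nat.exists_eq_add_of_lt hlt
  rw [cycProd_eq_mul_erase M hb hL, cycProd_eq_mul_erase N hb hL, hj] at h
  set R := ∏ c ∈ (Finset.Icc 1 L).erase b, cyclotomic c ℤ ^ M c
  have h' : cyclotomic b ℤ ^ M b * (P * C (u : ℤ) * R * X ^ k)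
      = cyclotomic b ℤ ^ M b * (cyclotomic b ℤ * (g * C (t : ℤ) * cyclotomic b ℤ ^ j
        * (∏ c ∈ (Finset.Icc 1 L).erase b, cyclotomic c ℤ ^ N c) * X ^ l)) := by
    linear_combination h
  have h2 := congrArg (aeval ζ)
    (mul_left_cancel₀ (pow_ne_zero _ (cyclotomic_ne_zero b ℤ)) h')
  rw [map_mul (aeval ζ) (cyclotomic b ℤ),
    (aeval_primitiveRoot_cyclotomic_eq_zero_iff hζ hb).2 rfl, zero_mul] at h2
  have hR : aeval ζ R ≠ 0 := by
    rw [map_prod, Finset.prod_ne_zero_iff]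
    intro c hc
    rw [Finset.mem_erase, Finset.mem_Icc] at hc
    rw [map_pow]
    exact pow_ne_zero _ fun h0 =>
      hc.1 ((aeval_primitiveRoot_cyclotomic_eq_zero_iff hζ hc.2.1).1 h0)
  have hu : ((u : ℤ) : ℂ) ≠ 0 := by exact_mod_cast u.ne_zero
  have hζ0 : ζ ≠ 0 := hζ.ne_zero (by omega)
  simp [hP, hR, hζ0] at h2

/-- Laurent integrality up to a geometric factor means nonnegativity of all but finitely many
cyclotomic valuations. -/
lemma exists_isIntLaurent_iff_eventually_dvdCount {v w : ℕ} (rr : Fin v → ℤ × ℤ)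
    (tt : Fin w → ℤ × ℤ) (hs : ∀ i, (rr i).2 ≠ 0) (hu : ∀ j, (tt j).2 ≠ 0)
    (ht : ∀ j, ¬ IsNonPosInt (ratOf (tt j))) (hr : ∀ i, ¬ IsNonPosInt (ratOf (rr i))) :
    (∃ P : Polynomial ℤ, P ≠ 0 ∧ ∀ n : ℕ, IsIntLaurent (polyZ P ^ n * qHyp rr tt n)) ↔
      ∀ᶠ b in Filter.atTop, ∀ n,
        ∑ j, dvdCount (tt j) b n ≤ ∑ i, dvdCount (rr i) b n := by
  have hX : (RatFunc.X : RatFunc ℚ) ≠ 0 := RatFunc.X_ne_zero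
  have hne : ∀ (L : ℕ) (N : ℕ → ℕ) (t : ℤˣ), polyZHom (C (t : ℤ) * cycProd L N) ≠ 0 := by
    intro L N t
    rw [map_ne_zero_iff _ polyZHom_injective]
    exact mul_ne_zero (C_ne_zero.2 t.ne_zero) (cycProd_ne_zero L N)
  constructor
  · rintro ⟨P, hP, h⟩
    filter_upwards [eventually_aeval_primitiveRoot_ne_zero hP, Filter.eventually_ge_atTop 1]
      with b hb hb1 n
    obtain ⟨L, ⟨k, u, hA⟩, ⟨l, t, hB⟩, hL⟩ :=
      ((eventually_isCycProd_prod_qPoch rr hs hr n).and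
        ((eventually_isCycProd_prod_qPoch tt hu ht n).and (Filter.eventually_ge_atTop b))).exists
    obtain ⟨m, g, hg⟩ := h n
    have hζ := Complex.isPrimitiveRoot_exp b (by omega)
    have hPn : aeval (Complex.exp (2 * Real.pi * Complex.I / b)) (P ^ n) ≠ 0 := by
      rw [map_pow]
      exact pow_ne_zero _ (hb _ hζ)
    refine le_of_cycProd_mul_eq (P := P ^ n) (g := g)
      (M := fun b => ∑ i, dvdCount (rr i) b n) (N := fun b => ∑ j, dvdCount (tt j) b n)
      (k := l + m) (l := k) (u := u) (t := t)
      hb1 hL hζ hPn (polyZHom_injective ?_)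
    have hB0 : ∏ j, qPoch (tt j).1 (tt j).2 n ≠ 0 := by
      intro h0
      rw [h0, zero_mul] at hB
      exact hne _ _ _ hB.symm
    rw [qHyp, polyZ_eq_polyZHom, polyZ_eq_polyZHom] at hg
    rw [map_mul polyZHom (_ * _), map_mul polyZHom (P ^ n), map_mul polyZHom (g * _),
      map_mul polyZHom g, ← hA, ← hB, ← hg, map_pow, map_pow, map_pow, polyZHom_X]
    field_simp
    ring
  · intro h
    obtain ⟨B, hB⟩ := Filter.eventually_atTop.1 h
    refine ⟨cycProd B (fun _ => w), cycProd_ne_zero _ _, fun n => ?_⟩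
    obtain ⟨L, ⟨k, u, hA⟩, ⟨l, t, hC⟩, hL⟩ :=
      ((eventually_isCycProd_prod_qPoch rr hs hr n).and
        ((eventually_isCycProd_prod_qPoch tt hu ht n).and (Filter.eventually_ge_atTop B))).exists
    have hextend : cycProd B (fun _ => w) ^ n
        = cycProd L (fun b => if b ≤ B then w * n else 0) := by
      simp only [cycProd, ← Finset.prod_pow, ← pow_mul, pow_ite, pow_zero]
      rw [← Finset.prod_filter]
      refine Finset.prod_congr ?_ fun _ _ => rfl
      ext b
      simp only [Finset.mem_filter, Finset.mem_Icc]
      omega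
    have hsplit : cycProd L (fun b => if b ≤ B then w * n else 0)
          * cycProd L (fun b => ∑ i, dvdCount (rr i) b n)
        = cycProd L (fun b => (if b ≤ B then w * n else 0)
            + ∑ i, dvdCount (rr i) b n - ∑ j, dvdCount (tt j) b n)
          * cycProd L (fun b => ∑ j, dvdCount (tt j) b n) := by
      rw [← cycProd_add, ← cycProd_add]
      congr 1
      funext b
      refine (Nat.sub_add_cancel ?_).symm
      split_ifs with hb
      · calc ∑ j, dvdCount (tt j) b n ≤ ∑ _j : Fin w, n :=
              Finset.sum_le_sum fun j _ => dvdCount_le _ _ _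
          _ = w * n := by simp
          _ ≤ _ := Nat.le_add_right _ _
      · simpa using hB b (by omega) n
    have hB0 : ∏ j, qPoch (tt j).1 (tt j).2 n ≠ 0 := by
      intro h0
      rw [h0, zero_mul] at hC
      exact hne _ _ _ hC.symm
    refine ⟨k, C ((u * t : ℤˣ) : ℤ) * X ^ l * cycProd L (fun b => (if b ≤ B then w * n else 0)
            + ∑ i, dvdCount (rr i) b n - ∑ j, dvdCount (tt j) b n), ?_⟩
    rw [qHyp, polyZ_eq_polyZHom, polyZ_eq_polyZHom, ← map_pow, hextend, mul_div_assoc',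
      div_mul_eq_mul_div, div_eq_iff hB0]
    refine mul_right_cancel₀ (pow_ne_zero l hX) ?_
    have hunit : C ((u * t : ℤˣ) : ℤ) * C (t : ℤ) = C (u : ℤ) := by
      rw [← C_mul, ← Units.val_mul, mul_assoc, Int.units_mul_self, mul_one]
    rw [mul_assoc (polyZHom _), hA, mul_assoc (polyZHom (C _ * _ * _)), hC, ← polyZHom_X, ← map_pow,
      ← map_mul, ← map_mul, ← map_mul]
    congr 1
    linear_combination C (u : ℤ) * X ^ l * hsplit - X ^ l * hunit
      * cycProd L (fun b => (if b ≤ B then w * n else 0)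
            + ∑ i, dvdCount (rr i) b n - ∑ j, dvdCount (tt j) b n)
      * cycProd L (fun b => ∑ j, dvdCount (tt j) b n)

lemma cangle_pos (x : ℝ) : 0 < cangle x := by
  unfold cangle
  split_ifs with h
  · exact one_pos
  · refine lt_of_le_of_ne (Int.fract_nonneg x) fun h0 => h ⟨⌊x⌋, ?_⟩
    have := Int.floor_add_fract x
    linarith

lemma cangle_le_one (x : ℝ) : cangle x ≤ 1 := by
  unfold cangle
  split_ifs with h
  · exact le_rfl
  · exact (Int.fract_lt_one x).le

lemma exists_eq_cangle_add_int (x : ℝ) : ∃ z : ℤ, x = cangle x + z := by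
  unfold cangle
  split_ifs with h
  · obtain ⟨m, rfl⟩ := h
    exact ⟨m - 1, by push_cast; ring⟩
  · exact ⟨⌊x⌋, by rw [add_comm, Int.floor_add_fract]⟩

lemma cangle_add_int {y : ℝ} (h0 : 0 < y) (h1 : y ≤ 1) (z : ℤ) : cangle (y + z) = y := by
  obtain ⟨w, hw⟩ := exists_eq_cangle_add_int (y + z)
  have h2 := cangle_pos (y + z)
  have h3 := cangle_le_one (y + z)
  set t := cangle (y + z)
  have h4 : y - t = ((w - z : ℤ) : ℝ) := by push_cast; linarith
  have h5 : w - z < 1 := by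
    have : ((w - z : ℤ) : ℝ) < (1 : ℤ) := by push_cast at h4 ⊢; linarith
    exact_mod_cast this
  have h6 : -1 < w - z := by
    have : ((-1 : ℤ) : ℝ) < (w - z : ℤ) := by push_cast at h4 ⊢; linarith
    exact_mod_cast this
  have h7 : w - z = 0 := by omega
  rw [h7] at h4
  push_cast at h4
  linarith

lemma cOf_dvd_right (p : ℤ × ℤ) (b : ℕ) : cOf p b ∣ p.2.natAbs :=
  (Nat.gcd_dvd_left _ _).trans (Nat.gcd_dvd_right _ _)

lemma cOf_dvd_left (p : ℤ × ℤ) (b : ℕ) : cOf p b ∣ p.1.natAbs :=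
  (Nat.gcd_dvd_left _ _).trans (Nat.gcd_dvd_left _ _)

lemma cOf_dvd (p : ℤ × ℤ) (b : ℕ) : cOf p b ∣ b := Nat.gcd_dvd_right _ _

lemma cOf_pos {p : ℤ × ℤ} (hs : p.2 ≠ 0) (b : ℕ) : 0 < cOf p b :=
  Nat.pos_of_dvd_of_pos (cOf_dvd_right p b) (Int.natAbs_pos.2 hs)

lemma gcd_congr_of_modEq {m d b b₀ : ℕ} (hm : m ∣ d) (h : b ≡ b₀ [MOD d]) :
    Nat.gcd m b = Nat.gcd m b₀ := by
  rw [Nat.gcd_comm m b, Nat.gcd_comm m b₀]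
  exact (h.of_dvd hm).gcd_eq

lemma cOf_congr {p : ℤ × ℤ} {d b b₀ : ℕ} (hd : p.2.natAbs ∣ d) (h : b ≡ b₀ [MOD d]) :
    cOf p b = cOf p b₀ :=
  gcd_congr_of_modEq ((Nat.gcd_dvd_right _ _).trans hd) h

lemma inV_congr {p : ℤ × ℤ} {d b b₀ : ℕ} (hd : p.2.natAbs ∣ d) (h : b ≡ b₀ [MOD d]) :
    inV p b ↔ inV p b₀ := by
  rw [inV, inV, cOf_congr hd h, gcd_congr_of_modEq hd h]

lemma goodChoice_congr {p : ℤ × ℤ} {d b b₀ : ℕ} {e : ℤ} (hd : p.2.natAbs ∣ d)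
    (h : b ≡ b₀ [MOD d]) (he : goodChoice p b₀ e) : goodChoice p b e := by
  intro hb
  obtain ⟨h1, h2⟩ := he ((inV_congr hd h).1 hb)
  refine ⟨h1, ?_⟩
  have h3 : p.2 ∣ (b : ℤ) - b₀ :=
    (Int.natAbs_dvd.1 (Int.natCast_dvd_natCast.2 hd)).trans
      (Int.modEq_iff_dvd.1 (Int.natCast_modEq_iff.2 h.symm))
  rw [cOf_congr hd h]
  have h4 : (b : ℤ) * e - cOf p b₀ = ((b : ℤ) - b₀) * e + (b₀ * e - cOf p b₀) := by ring
  rw [h4]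
  exact dvd_add (h3.mul_right e) h2

lemma exists_goodChoice {p : ℤ × ℤ} (hs : p.2 ≠ 0) (b : ℕ) : ∃ e, goodChoice p b e := by
  refine ⟨Int.gcdB p.2 b + |p.2| * (|Int.gcdB p.2 b| + 1), fun h => ⟨?_, ?_⟩⟩
  · have h1 : 1 ≤ |p.2| := Int.one_le_abs hs
    have h2 := neg_abs_le (Int.gcdB p.2 b)
    nlinarith [abs_nonneg (Int.gcdB p.2 b)]
  · have h1 := Int.gcd_eq_gcd_ab p.2 b
    have h2 : (Int.gcd p.2 b : ℤ) = cOf p b := by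
      rw [← h]
      simp [Int.gcd]
    have h3 : (b : ℤ) * (Int.gcdB p.2 b + |p.2| * (|Int.gcdB p.2 b| + 1)) - cOf p b
        = |p.2| * (b * (|Int.gcdB p.2 b| + 1)) - p.2 * Int.gcdA p.2 b := by
      rw [← h2, h1]
      ring
    rw [h3]
    exact dvd_sub (((dvd_abs _ _).2 dvd_rfl).mul_right _) (dvd_mul_right _ _)

lemma inV_of_dvd {p : ℤ × ℤ} {b : ℕ} {k : ℤ} (h : (b : ℤ) ∣ p.1 + p.2 * k) : inV p b := by
  refine Nat.dvd_antisymm (Nat.dvd_gcd (Nat.dvd_gcd ?_ (Nat.gcd_dvd_left _ _))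
    (Nat.gcd_dvd_right _ _)) (Nat.gcd_dvd_gcd_of_dvd_left _ (Nat.gcd_dvd_right _ _))
  rw [← Int.natCast_dvd]
  have h1 : ((Nat.gcd p.2.natAbs b : ℕ) : ℤ) ∣ p.2 := Int.natCast_dvd.2 (Nat.gcd_dvd_left _ _)
  have h2 : ((Nat.gcd p.2.natAbs b : ℕ) : ℤ) ∣ p.1 + p.2 * k :=
    (Int.natCast_dvd_natCast.2 (Nat.gcd_dvd_right _ _)).trans h
  exact (dvd_add_left (h1.mul_right k)).1 h2

/-- The representative `θ = ⟨e · α⟩ ∈ (0, 1]`: the abscissa of the first jump, up to scaling. -/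
noncomputable def baseAngle (p : ℤ × ℤ) (e : ℤ) : ℝ := cangle (((e : ℚ) * ratOf p : ℚ) : ℝ)

lemma exists_reduction {p : ℤ × ℤ} (hs : p.2 ≠ 0) {b : ℕ} {e : ℤ} (hV : inV p b)
    (he : goodChoice p b e) : ∃ r s b' t : ℤ, p.1 = cOf p b * r ∧ p.2 = cOf p b * s ∧
      (b : ℤ) = cOf p b * b' ∧ s * t = b' * e - 1 ∧ s ≠ 0 ∧ (ratOf p : ℝ) * s = r := by
  obtain ⟨r, hr⟩ := Int.natCast_dvd.2 (cOf_dvd_left p b)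
  obtain ⟨s, hs'⟩ := Int.natCast_dvd.2 (cOf_dvd_right p b)
  obtain ⟨b', hb'⟩ := Int.natCast_dvd_natCast.2 (cOf_dvd p b)
  obtain ⟨t, ht⟩ := (he hV).2
  have hc : (cOf p b : ℤ) ≠ 0 := by exact_mod_cast (cOf_pos hs b).ne'
  have hs0 : s ≠ 0 := by
    rintro rfl
    exact hs (by simpa using hs')
  refine ⟨r, s, b', t, hr, hs', hb', ?_, hs0, ?_⟩
  · refine mul_left_cancel₀ hc ?_
    linear_combination -ht + e * hb' - t * hs'
  · have h1 : (p.2 : ℝ) ≠ 0 := by exact_mod_cast hs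
    have h2 : (cOf p b : ℝ) ≠ 0 := by exact_mod_cast hc
    have h3 : (p.1 : ℝ) = cOf p b * r := by exact_mod_cast hr
    have h4 : (p.2 : ℝ) = cOf p b * s := by exact_mod_cast hs'
    have h5 : (ratOf p : ℝ) * p.2 = p.1 := by
      rw [ratOf]
      push_cast
      field_simp
    refine mul_left_cancel₀ h2 ?_
    linear_combination h5 + h3 - (ratOf p : ℝ) * h4

lemma eventually_lt_natCast_mul {δ : ℝ} (hδ : 0 < δ) (K : ℝ) :
    ∀ᶠ b : ℕ in Filter.atTop, K < b * δ :=
  (tendsto_natCast_atTop_atTop.atTop_mul_const hδ).eventually_gt_atTop K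

lemma ratOf_pos_or_baseAngle_lt_one {p : ℤ × ℤ} (hs : p.2 ≠ 0) (hp : ¬ IsNonPosInt (ratOf p))
    {b : ℕ} {e : ℤ} (hV : inV p b) (he : goodChoice p b e) :
    0 < (ratOf p : ℝ) ∨ baseAngle p e < 1 := by
  by_contra! h
  obtain ⟨r, s, b', t, -, -, -, hst, -, hα⟩ := exists_reduction hs hV he
  obtain ⟨z, hz⟩ := exists_eq_cangle_add_int (((e : ℚ) * ratOf p : ℚ) : ℝ)
  have h1 : cangle (((e : ℚ) * ratOf p : ℚ) : ℝ) = 1 := le_antisymm (cangle_le_one _) h.2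
  rw [h1] at hz
  push_cast at hz
  have hst' : (s : ℝ) * t = b' * e - 1 := by exact_mod_cast hst
  have h2 : (ratOf p : ℝ) = ((b' * (1 + z) - t * r : ℤ) : ℝ) := by
    push_cast
    linear_combination b' * hz - t * hα + (ratOf p : ℝ) * hst'
  refine hp ⟨b' * (1 + z) - t * r, ?_, by exact_mod_cast h2⟩
  have h3 := h.1
  rw [h2] at h3
  exact_mod_cast h3

/-- The `k ≥ 0` with `b ∣ r + s k` are the numbers `b (θ + m) / c - α` with `m ≥ 0`. -/
lemma eventually_dvd_iff_exists {p : ℤ × ℤ} (hs : p.2 ≠ 0) (hp : ¬ IsNonPosInt (ratOf p))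
    {d b₀ : ℕ} {e : ℤ} (hd : p.2.natAbs ∣ d) (hV : inV p b₀) (he : goodChoice p b₀ e) :
    ∀ᶠ b : ℕ in Filter.atTop, b ≡ b₀ [MOD d] →
      (∀ m : ℕ, ∃ k : ℕ, (b : ℤ) ∣ p.1 + p.2 * (k : ℤ) ∧
        (k : ℝ) = b * ((baseAngle p e + m) / cOf p b₀) - ratOf p) ∧
      ∀ k : ℕ, (b : ℤ) ∣ p.1 + p.2 * (k : ℤ) → ∃ m : ℕ,
        (k : ℝ) = b * ((baseAngle p e + m) / cOf p b₀) - ratOf p := by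
  have hc0 : (0 : ℝ) < cOf p b₀ := by exact_mod_cast cOf_pos hs b₀
  have hθ : 0 < baseAngle p e := cangle_pos _
  have hE : ∀ᶠ b : ℕ in Filter.atTop, 0 < (ratOf p : ℝ) ∨
      -(ratOf p : ℝ) < b * ((1 - baseAngle p e) / cOf p b₀) := by
    obtain h | h := ratOf_pos_or_baseAngle_lt_one hs hp hV he
    · exact Filter.Eventually.of_forall fun _ => Or.inl h
    · filter_upwards [eventually_lt_natCast_mul (div_pos (sub_pos.2 h) hc0) (-(ratOf p : ℝ))]
        with b hb using Or.inr hb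
  filter_upwards [hE, eventually_lt_natCast_mul (div_pos hθ hc0) (ratOf p)] with b hb1 hb2 hb
  obtain ⟨r, s, b', t, hr, hs', hb', hst, hs0, hα⟩ :=
    exists_reduction hs ((inV_congr hd hb).2 hV) (goodChoice_congr hd hb he)
  rw [cOf_congr hd hb] at hr hs' hb'
  obtain ⟨z, hz⟩ := exists_eq_cangle_add_int (((e : ℚ) * ratOf p : ℚ) : ℝ)
  change _ = baseAngle p e + z at hz
  push_cast at hz
  have hst' : (s : ℝ) * t = b' * e - 1 := by exact_mod_cast hst
  have hbR : (b : ℝ) = cOf p b₀ * b' := by exact_mod_cast hb'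
  have hpos : ∀ m : ℝ, b * ((baseAngle p e + m) / cOf p b₀) - ratOf p
      = t * r + b' * (m - z) := by
    intro m
    rw [hbR]
    field_simp
    linear_combination -b' * hz + t * hα - (ratOf p : ℝ) * hst'
  have hdvd : ∀ k : ℤ, (b : ℤ) ∣ p.1 + p.2 * k ↔ ∃ j : ℤ, k = t * r + b' * j := by
    intro k
    rw [hr, hs', hb', mul_assoc, ← mul_add,
      mul_dvd_mul_iff_left (by exact_mod_cast (cOf_pos hs b₀).ne')]
    constructor
    · rintro ⟨y, hy⟩
      have hcop : IsCoprime b' s := ⟨e, -t, by linear_combination -hst⟩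
      have h1 : b' ∣ s * (k - t * r) := ⟨y - e * r, by linear_combination hy - r * hst⟩
      obtain ⟨j, hj⟩ := hcop.dvd_of_dvd_mul_left h1
      exact ⟨j, by linear_combination hj⟩
    · rintro ⟨j, rfl⟩
      exact ⟨e * r + s * j, by linear_combination r * hst⟩
  constructor
  · intro m
    have h0 : 0 ≤ t * r + b' * ((m : ℤ) - z) := by
      have h1 := hpos m
      have h2 : (b : ℝ) * (baseAngle p e / cOf p b₀)
          ≤ b * ((baseAngle p e + m) / cOf p b₀) := by
        gcongr
        simp
      have h3 : (0 : ℝ) ≤ t * r + b' * (m - z) := by linarith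
      exact_mod_cast h3
    refine ⟨(t * r + b' * ((m : ℤ) - z)).toNat, ?_, ?_⟩
    · rw [hdvd, Int.toNat_of_nonneg h0]
      exact ⟨_, rfl⟩
    · rw [hpos]
      have h1 : (((t * r + b' * ((m : ℤ) - z)).toNat : ℤ) : ℝ)
          = ((t * r + b' * ((m : ℤ) - z) : ℤ) : ℝ) := by rw [Int.toNat_of_nonneg h0]
      push_cast at h1
      exact h1
  · intro k hk
    obtain ⟨j, hj⟩ := (hdvd k).1 hk
    have hkR : (k : ℝ) = b * ((baseAngle p e + (j + z : ℤ)) / cOf p b₀) - ratOf p := by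
      rw [hpos]
      have : (k : ℝ) = t * r + b' * j := by exact_mod_cast hj
      rw [this]
      push_cast
      ring
    have hj0 : 0 ≤ j + z := by
      by_contra! hneg
      have h1 : ((j + z : ℤ) : ℝ) ≤ -1 := by
        have : j + z ≤ -1 := by omega
        exact_mod_cast this
      have hk0 : (0 : ℝ) ≤ k := by positivity
      have h2 : (b : ℝ) * ((baseAngle p e + (j + z : ℤ)) / cOf p b₀)
          ≤ b * ((baseAngle p e - 1) / cOf p b₀) := by
        gcongr
        linarith
      have h3 : (b : ℝ) * ((baseAngle p e - 1) / cOf p b₀)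
          = -(b * ((1 - baseAngle p e) / cOf p b₀)) := by ring
      have h4 : 0 ≤ (b : ℝ) * ((1 - baseAngle p e) / cOf p b₀) :=
        mul_nonneg (by positivity)
          (div_nonneg (sub_nonneg.2 (cangle_le_one _)) hc0.le)
      obtain h | h := hb1 <;> linarith
    obtain ⟨m, hm⟩ := Int.eq_ofNat_of_zero_le hj0
    refine ⟨m, ?_⟩
    rw [hkR, hm]
    simp

/-- Counting the terms below `n` of a progression indexed by `m = k + c ℓ'`. -/
lemma dvdCount_eq {p : ℤ × ℤ} {b c n l : ℕ} {pos : ℕ → ℝ} {Q : ℕ → Prop} (hc : 0 < c)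
    (hinj : Function.Injective pos)
    (h1 : ∀ m : ℕ, ∃ k : ℕ, (b : ℤ) ∣ p.1 + p.2 * (k : ℤ) ∧ (k : ℝ) = pos m)
    (h2 : ∀ k : ℕ, (b : ℤ) ∣ p.1 + p.2 * (k : ℤ) → ∃ m : ℕ, (k : ℝ) = pos m)
    (H : ∀ k < c, ∀ l', pos (k + c * l') < n ↔ l' < l ∨ (l' = l ∧ Q k)) :
    dvdCount p b n = c * l + ((Finset.range c).filter Q).card := by
  choose g hg1 hg2 using h1
  have hginj : Function.Injective g := fun m m' hm =>
    hinj (by rw [← hg2, ← hg2, hm])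
  have hdisj : Disjoint (Finset.range (c * l))
      (((Finset.range c).filter Q).map (addRightEmbedding (c * l))) := by
    rw [Finset.disjoint_left]
    intro m hm hm'
    simp only [Finset.mem_map, Finset.mem_range, addRightEmbedding_apply] at hm hm'
    obtain ⟨k, -, rfl⟩ := hm'
    omega
  have hset : (Finset.range n).filter (fun k : ℕ => (b : ℤ) ∣ p.1 + p.2 * (k : ℤ))
      = (Finset.range (c * l) ∪
        ((Finset.range c).filter Q).map (addRightEmbedding (c * l))).image g := by
    have hT : ∀ m, m ∈ Finset.range (c * l) ∪
        ((Finset.range c).filter Q).map (addRightEmbedding (c * l)) ↔ pos m < n := by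
      intro m
      have hm := H (m % c) (Nat.mod_lt m hc) (m / c)
      rw [Nat.mod_add_div] at hm
      rw [hm]
      simp only [Finset.mem_union, Finset.mem_range, Finset.mem_map, Finset.mem_filter,
        addRightEmbedding_apply]
      refine or_congr (by rw [Nat.div_lt_iff_lt_mul hc, mul_comm]) ?_
      constructor
      · rintro ⟨k, ⟨hk, hQ⟩, rfl⟩
        rw [Nat.add_mul_mod_self_left, Nat.mod_eq_of_lt hk, Nat.add_mul_div_left _ _ hc,
          Nat.div_eq_of_lt hk]
        exact ⟨by simp, hQ⟩
      · rintro ⟨rfl, hQ⟩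
        exact ⟨m % c, ⟨Nat.mod_lt m hc, hQ⟩, Nat.mod_add_div m c⟩
    ext k
    simp only [Finset.mem_filter, Finset.mem_range, Finset.mem_image, hT]
    constructor
    · rintro ⟨hk, hd⟩
      obtain ⟨m, hm⟩ := h2 k hd
      refine ⟨m, by rw [← hm]; exact_mod_cast hk, ?_⟩
      have h3 := hg2 m
      rw [← hm] at h3
      exact_mod_cast h3
    · rintro ⟨m, hm, rfl⟩
      rw [← hg2] at hm
      exact ⟨by exact_mod_cast hm, hg1 m⟩
  rw [dvdCount, hset, Finset.card_image_of_injective _ hginj, Finset.card_union_of_disjoint hdisj,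
    Finset.card_map, Finset.card_range]

lemma eventually_lt_iff_lex {u y : ℝ} (hu0 : 0 < u) (hu1 : u ≤ 1) (hy0 : 0 < y) (hy1 : y ≤ 1)
    (α κ : ℝ) : ∀ᶠ b : ℕ in Filter.atTop, ∀ l l' : ℕ,
      (b * (u + l') - α < b * (y + l) - κ ↔
        l' < l ∨ (l' = l ∧ (u < y ∨ (u = y ∧ κ < α)))) := by
  have hE : ∀ᶠ b : ℕ in Filter.atTop, u = y ∨ |α - κ| < b * |u - y| := by
    by_cases h : u = y
    · exact Filter.Eventually.of_forall fun _ => Or.inl h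
    · filter_upwards [eventually_lt_natCast_mul (abs_pos.2 (sub_ne_zero.2 h)) |α - κ|]
        with b hb using Or.inr hb
  filter_upwards [hE, eventually_lt_natCast_mul hu0 |α - κ|,
    eventually_lt_natCast_mul hy0 |α - κ|] with b hb hbu hby l l'
  have h1 := le_abs_self (α - κ)
  have h2 := neg_abs_le (α - κ)
  have hb0 : (0 : ℝ) ≤ b := by positivity
  obtain hl | rfl | hl := lt_trichotomy l' l
  · have h3 : (l' : ℝ) + 1 ≤ l := by exact_mod_cast hl
    have h4 := mul_le_mul_of_nonneg_left h3 hb0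
    have h5 := mul_le_mul_of_nonneg_left hu1 hb0
    simp only [hl, true_or, iff_true]
    linarith
  · simp only [lt_self_iff_false, false_or, true_and]
    obtain rfl | hb := hb
    · simp only [lt_self_iff_false, false_or, true_and]
      constructor <;> intro h <;> linarith
    · obtain h | h | h := lt_trichotomy u y
      · rw [abs_of_neg (sub_neg.2 h)] at hb
        simp only [h, true_or, iff_true]
        linarith
      · rw [h] at hb
        simp only [sub_self, abs_zero, mul_zero] at hb
        exact absurd hb (abs_nonneg _).not_gt
      · rw [abs_of_pos (sub_pos.2 h)] at hb
        simp only [h.not_gt, h.ne', false_and, or_self, iff_false, not_lt]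
        linarith
  · have h3 : (l : ℝ) + 1 ≤ l' := by exact_mod_cast hl
    have h4 := mul_le_mul_of_nonneg_left h3 hb0
    have h5 := mul_le_mul_of_nonneg_left hy1 hb0
    simp only [hl.not_gt, hl.ne', false_and, or_self, iff_false, not_lt]
    linarith

/-- The fractional part of a jump abscissa. -/
noncomputable def jumpAngle (p : ℤ × ℤ) (b : ℕ) (e : ℤ) (k : ℕ) : ℝ :=
  (baseAngle p e + k) / cOf p b

lemma jumpAngle_pos {p : ℤ × ℤ} (hs : p.2 ≠ 0) (b : ℕ) (e : ℤ) (k : ℕ) :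
    0 < jumpAngle p b e k := by
  have h1 : (0 : ℝ) < cOf p b := by exact_mod_cast cOf_pos hs b
  have h2 : 0 < baseAngle p e := cangle_pos _
  unfold jumpAngle
  positivity

lemma jumpAngle_le_one {p : ℤ × ℤ} {b : ℕ} (e : ℤ) {k : ℕ} (hk : k < cOf p b) :
    jumpAngle p b e k ≤ 1 := by
  have h1 : (0 : ℝ) < cOf p b := by exact_mod_cast (Nat.zero_le k).trans_lt hk
  have h2 : baseAngle p e ≤ 1 := cangle_le_one _
  have h3 : (k : ℝ) + 1 ≤ cOf p b := by exact_mod_cast hk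
  rw [jumpAngle, div_le_one h1]
  linarith

lemma jumpPt_eq (p : ℤ × ℤ) (b : ℕ) (a e : ℤ) (k : ℕ) :
    jumpPt p b a e k = jumpAngle p b e k + ((-⌊1 - (a : ℚ) * ratOf p⌋ : ℤ) : ℝ) := by
  rw [jumpPt, jumpAngle, baseAngle]
  push_cast
  ring

lemma cangle_jumpPt {p : ℤ × ℤ} (hs : p.2 ≠ 0) {b : ℕ} (a e : ℤ) {k : ℕ} (hk : k < cOf p b) :
    cangle (jumpPt p b a e k) = jumpAngle p b e k := by
  rw [jumpPt_eq]
  exact cangle_add_int (jumpAngle_pos hs b e k) (jumpAngle_le_one e hk) _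

/-- For large `b` in a residue class, the divisibility count is a value of the step function. -/
lemma eventually_dvdCount_eq {p : ℤ × ℤ} (hs : p.2 ≠ 0) (hp : ¬ IsNonPosInt (ratOf p))
    {d b₀ : ℕ} {e : ℤ} (hd : p.2.natAbs ∣ d) (he : goodChoice p b₀ e) (a : ℤ) (x κ : ℝ) :
    ∀ᶠ b : ℕ in Filter.atTop, b ≡ b₀ [MOD d] → ∀ l n : ℕ,
      (∀ z : ℤ, z < n ↔ (z : ℝ) < b * (cangle x + l) - κ) →
      (∀ k < cOf p b₀, jumpAngle p b₀ e k = cangle x →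
        (∃ z : ℤ, b * cangle x - (ratOf p : ℝ) = z) →
        (κ < ratOf p ↔ x ≤ jumpPt p b₀ a e k)) →
      dvdCount p b n = (if inV p b₀ then cOf p b₀ else 0) * l + XiCount p b₀ a e x := by
  by_cases hV : inV p b₀
  swap
  · refine Filter.Eventually.of_forall fun b hb l n _ _ => ?_
    simp only [XiCount, if_neg hV, zero_mul, add_zero, dvdCount, Finset.card_eq_zero,
      Finset.filter_eq_empty_iff]
    exact fun k _ hk => hV ((inV_congr hd hb).1 (inV_of_dvd hk))
  have hc := cOf_pos hs b₀
  have hE : ∀ᶠ b : ℕ in Filter.atTop, ∀ k ∈ Finset.range (cOf p b₀), ∀ l l' : ℕ,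
      (b * (jumpAngle p b₀ e k + l') - ratOf p < b * (cangle x + l) - κ ↔
        l' < l ∨ (l' = l ∧ (jumpAngle p b₀ e k < cangle x ∨
          (jumpAngle p b₀ e k = cangle x ∧ κ < ratOf p)))) :=
    (Filter.eventually_all_finset _).2 fun k hk =>
      eventually_lt_iff_lex (jumpAngle_pos hs b₀ e k) (jumpAngle_le_one e (Finset.mem_range.1 hk))
        (cangle_pos x) (cangle_le_one x) _ _
  filter_upwards [hE, eventually_dvd_iff_exists hs hp hd hV he, Filter.eventually_gt_atTop 0]
    with b hb1 hb2 hb0 hb l n hn htie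
  obtain ⟨h1, h2⟩ := hb2 hb
  have hcR : (0 : ℝ) < cOf p b₀ := by exact_mod_cast hc
  have hbR : (0 : ℝ) < b := by exact_mod_cast hb0
  rw [XiCount, if_pos hV, if_pos hV]
  refine dvdCount_eq hc (pos := fun m : ℕ => b * ((baseAngle p e + m) / cOf p b₀) - ratOf p)
    ?_ h1 h2 ?_
  · intro m m' hm
    have h3 := mul_left_cancel₀ hbR.ne' (sub_left_injective hm)
    rw [div_left_inj' hcR.ne', add_right_inj] at h3
    exact_mod_cast h3
  · intro k hk l'
    have hpos : (baseAngle p e + ((k + cOf p b₀ * l' : ℕ) : ℝ)) / cOf p b₀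
        = jumpAngle p b₀ e k + l' := by
      rw [jumpAngle]
      push_cast
      field_simp
      ring
    obtain ⟨N, -, hN⟩ := h1 (k + cOf p b₀ * l')
    rw [hpos] at hN
    have h3 := hn N
    have h4 : ((N : ℤ) < n) ↔ (N : ℝ) < n := by exact_mod_cast Iff.rfl
    rw [h4, Int.cast_natCast, hN, hb1 k (Finset.mem_range.2 hk)] at h3
    simp only [hpos]
    rw [h3]
    refine or_congr Iff.rfl (and_congr Iff.rfl ?_)
    rw [cle, cangle_jumpPt hs a e hk]
    refine or_congr Iff.rfl (and_congr_right fun hEq => htie k hk hEq ⟨N - b * l', ?_⟩)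
    rw [hEq] at hN
    push_cast
    linarith

lemma eventually_XiCount_neg_natCast {p : ℤ × ℤ} (hs : p.2 ≠ 0) (b : ℕ) (a e : ℤ) :
    ∀ᶠ M : ℕ in Filter.atTop,
      XiCount p b a e (-(M : ℝ)) = if inV p b then cOf p b else 0 := by
  filter_upwards [Filter.eventually_ge_atTop (⌊1 - (a : ℚ) * ratOf p⌋).natAbs] with M hM
  rw [XiCount]
  refine ite_congr rfl (fun _ => ?_) fun _ => rfl
  rw [Finset.filter_true_of_mem, Finset.card_range]
  intro k hk
  have hk' := Finset.mem_range.1 hk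
  have h1 : cangle (-(M : ℝ)) = 1 := if_pos ⟨-M, by simp⟩
  rw [cle, h1, cangle_jumpPt hs a e hk']
  refine (jumpAngle_le_one e hk').lt_or_eq.imp id fun h => ⟨h, ?_⟩
  rw [jumpPt_eq, h]
  have h2 : -(M : ℤ) ≤ -⌊1 - (a : ℚ) * ratOf p⌋ := by omega
  have h3 : (-(M : ℝ)) ≤ ((-⌊1 - (a : ℚ) * ratOf p⌋ : ℤ) : ℝ) := by exact_mod_cast h2
  linarith

lemma le_jumpPt_iff_div_lt {p : ℤ × ℤ} {b k : ℕ} {a e X : ℤ} (ha : 0 < a) {x : ℝ}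
    (hx : x = cangle x + X) (h : jumpAngle p b e k = cangle x) :
    (X : ℝ) / a < ratOf p ↔ x ≤ jumpPt p b a e k := by
  have haR : (0 : ℝ) < a := by exact_mod_cast ha
  rw [jumpPt_eq, h, hx, cangle_add_int (cangle_pos x) (cangle_le_one x), add_le_add_iff_left,
    Int.cast_le, le_neg, ← Int.lt_add_one_iff, Int.floor_lt, div_lt_iff₀ haR]
  have h1 : (1 - (a : ℚ) * ratOf p < ((-X + 1 : ℤ) : ℚ))
      ↔ (1 - (a : ℝ) * (ratOf p : ℝ) < ((-X + 1 : ℤ) : ℝ)) := by exact_mod_cast Iff.rfl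
  rw [h1]
  push_cast
  constructor <;> intro h2 <;> linarith

lemma jumpPt_le_jumpPt_iff {p p₀ : ℤ × ℤ} {b k k₀ : ℕ} {a e e₀ z : ℤ} (ha : 0 < a)
    (h : jumpAngle p b e k = jumpAngle p₀ b e₀ k₀)
    (hz : (ratOf p : ℝ) - ratOf p₀ = z) :
    (ratOf p₀ : ℝ) - 1 < ratOf p ↔ jumpPt p₀ b a e₀ k₀ ≤ jumpPt p b a e k := by
  have hzQ : ratOf p = ratOf p₀ + z := by
    have : ratOf p - ratOf p₀ = z := by exact_mod_cast hz
    linarith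
  have h1 : ⌊1 - (a : ℚ) * ratOf p⌋ = ⌊1 - (a : ℚ) * ratOf p₀⌋ - a * z := by
    rw [← Int.floor_sub_intCast]
    congr 1
    rw [hzQ]
    push_cast
    ring
  rw [jumpPt_eq, jumpPt_eq, h, h1, add_le_add_iff_left, Int.cast_le]
  have h2 : (ratOf p₀ : ℝ) - 1 < ratOf p ↔ 0 ≤ z := by
    rw [← Int.lt_add_one_iff]
    have h3 : ((0 : ℤ) : ℝ) < ((z + 1 : ℤ) : ℝ) ↔ 0 < z + 1 := Int.cast_lt
    rw [← h3]
    push_cast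
    constructor <;> intro <;> linarith
  rw [h2]
  constructor
  · intro h3
    nlinarith [mul_nonneg ha.le h3]
  · intro h3
    exact nonneg_of_mul_nonneg_right (by linarith : 0 ≤ a * z) ha

lemma aOf_pos (d b : ℕ) : 0 < aOf d b := by
  unfold aOf
  split_ifs with h
  · exact h.choose_spec.1
  · exact one_pos

lemma dRT_pos {v w : ℕ} {rr : Fin v → ℤ × ℤ} {tt : Fin w → ℤ × ℤ} (hs : ∀ i, (rr i).2 ≠ 0)
    (hu : ∀ j, (tt j).2 ≠ 0) : 0 < dRT rr tt := by
  refine Nat.pos_of_ne_zero (Nat.lcm_ne_zero ?_ ?_)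
  · simpa [Finset.lcm_eq_zero_iff] using hs
  · simpa [Finset.lcm_eq_zero_iff] using hu

lemma natAbs_dvd_dRT_left {v w : ℕ} (rr : Fin v → ℤ × ℤ) (tt : Fin w → ℤ × ℤ) (i : Fin v) :
    (rr i).2.natAbs ∣ dRT rr tt :=
  (Finset.dvd_lcm (f := fun i => (rr i).2.natAbs) (Finset.mem_univ i)).trans
    (Nat.dvd_lcm_left _ _)

lemma natAbs_dvd_dRT_right {v w : ℕ} (rr : Fin v → ℤ × ℤ) (tt : Fin w → ℤ × ℤ) (j : Fin w) :
    (tt j).2.natAbs ∣ dRT rr tt :=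
  (Finset.dvd_lcm (f := fun j => (tt j).2.natAbs) (Finset.mem_univ j)).trans
    (Nat.dvd_lcm_right _ _)

lemma Xi_nonneg_of_frequently {v w : ℕ} {rr : Fin v → ℤ × ℤ} {tt : Fin w → ℤ × ℤ}
    (hs : ∀ i, (rr i).2 ≠ 0) (hu : ∀ j, (tt j).2 ≠ 0)
    (ht : ∀ j, ¬ IsNonPosInt (ratOf (tt j))) (hr : ∀ i, ¬ IsNonPosInt (ratOf (rr i)))
    {b₀ : ℕ} {e : Fin v → ℤ} {f : Fin w → ℤ} (he : ∀ i, goodChoice (rr i) b₀ (e i))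
    (hf : ∀ j, goodChoice (tt j) b₀ (f j))
    (h : ∃ᶠ b in Filter.atTop, b ≡ b₀ [MOD dRT rr tt] ∧
      ∀ n, ∑ j, dvdCount (tt j) b n ≤ ∑ i, dvdCount (rr i) b n) (x : ℝ) :
    0 ≤ Xi rr tt b₀ e f x := by
  set d := dRT rr tt with hd
  have ha : (0 : ℤ) < ((aOf d b₀ : ℕ) : ℤ) := by exact_mod_cast aOf_pos d b₀
  rw [Xi, ← hd]
  set a : ℤ := ((aOf d b₀ : ℕ) : ℤ)
  obtain ⟨X, hX⟩ := exists_eq_cangle_add_int x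
  have hR := Filter.eventually_all.2 fun i => eventually_dvdCount_eq (hs i) (hr i)
    (natAbs_dvd_dRT_left rr tt i) (he i) a x (X / a)
  have hT := Filter.eventually_all.2 fun j => eventually_dvdCount_eq (hu j) (ht j)
    (natAbs_dvd_dRT_right rr tt j) (hf j) a x (X / a)
  obtain ⟨b, ⟨hb, hE⟩, hbR, hbT, hpos⟩ := (h.and_eventually
    (hR.and (hT.and (eventually_lt_natCast_mul (cangle_pos x) ((X : ℝ) / a))))).exists
  have hn : ∀ z : ℤ, z < ((⌈b * cangle x - (X : ℝ) / a⌉.toNat : ℕ) : ℤ)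
      ↔ (z : ℝ) < b * (cangle x + (0 : ℕ)) - (X : ℝ) / a := by
    intro z
    rw [Int.toNat_of_nonneg (Int.ceil_nonneg (by linarith)), Int.lt_ceil]
    simp
  have key := hE ⌈b * cangle x - (X : ℝ) / a⌉.toNat
  rw [Finset.sum_congr rfl fun i _ => hbR i hb 0 _ hn fun k _ hk _ =>
      le_jumpPt_iff_div_lt ha hX hk,
    Finset.sum_congr rfl fun j _ => hbT j hb 0 _ hn fun k _ hk _ =>
      le_jumpPt_iff_div_lt ha hX hk] at key
  simp only [mul_zero, zero_add] at key
  rw [sub_nonneg]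
  exact_mod_cast key

lemma eventually_dvdCount_le_of_Xi_nonneg {v w : ℕ} {rr : Fin v → ℤ × ℤ} {tt : Fin w → ℤ × ℤ}
    (hs : ∀ i, (rr i).2 ≠ 0) (hu : ∀ j, (tt j).2 ≠ 0)
    (ht : ∀ j, ¬ IsNonPosInt (ratOf (tt j))) (hr : ∀ i, ¬ IsNonPosInt (ratOf (rr i)))
    {b₀ : ℕ} {e : Fin v → ℤ} {f : Fin w → ℤ} (he : ∀ i, goodChoice (rr i) b₀ (e i))
    (hf : ∀ j, goodChoice (tt j) b₀ (f j)) (h : ∀ x, 0 ≤ Xi rr tt b₀ e f x) :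
    ∀ᶠ b in Filter.atTop, b ≡ b₀ [MOD dRT rr tt] →
      ∀ n, ∑ j, dvdCount (tt j) b n ≤ ∑ i, dvdCount (rr i) b n := by
  set d := dRT rr tt with hd
  have ha : (0 : ℤ) < ((aOf d b₀ : ℕ) : ℤ) := by exact_mod_cast aOf_pos d b₀
  simp only [Xi, ← hd] at h
  set a : ℤ := ((aOf d b₀ : ℕ) : ℤ)
  have h' : ∀ x, ∑ j, XiCount (tt j) b₀ a (f j) x ≤ ∑ i, XiCount (rr i) b₀ a (e i) x := by
    intro x
    have := h x
    rw [sub_nonneg] at this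
    exact_mod_cast this
  have hperiod : ∑ j, (if inV (tt j) b₀ then cOf (tt j) b₀ else 0)
      ≤ ∑ i, (if inV (rr i) b₀ then cOf (rr i) b₀ else 0) := by
    obtain ⟨M, hM1, hM2⟩ := ((Filter.eventually_all.2 fun i =>
      eventually_XiCount_neg_natCast (hs i) b₀ a (e i)).and (Filter.eventually_all.2 fun j =>
      eventually_XiCount_neg_natCast (hu j) b₀ a (f j))).exists
    have := h' (-(M : ℝ))
    rwa [Finset.sum_congr rfl fun i _ => hM1 i, Finset.sum_congr rfl fun j _ => hM2 j] at this
  have hR := Filter.eventually_all.2 fun j₀ => (Filter.eventually_all_finset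
    (Finset.range (cOf (tt j₀) b₀))).2 fun k₀ _ => Filter.eventually_all.2 fun i =>
    eventually_dvdCount_eq (hs i) (hr i) (natAbs_dvd_dRT_left rr tt i) (he i) a
      (jumpPt (tt j₀) b₀ a (f j₀) k₀) (ratOf (tt j₀) - 1)
  have hT := Filter.eventually_all.2 fun j₀ => (Filter.eventually_all_finset
    (Finset.range (cOf (tt j₀) b₀))).2 fun k₀ _ => Filter.eventually_all.2 fun j =>
    eventually_dvdCount_eq (hu j) (ht j) (natAbs_dvd_dRT_right rr tt j) (hf j) a
      (jumpPt (tt j₀) b₀ a (f j₀) k₀) (ratOf (tt j₀) - 1)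
  have hJ : ∀ᶠ b : ℕ in Filter.atTop, ∀ j, inV (tt j) b₀ → b ≡ b₀ [MOD d] →
      ∀ k : ℕ, (b : ℤ) ∣ (tt j).1 + (tt j).2 * (k : ℤ) → ∃ m : ℕ,
        (k : ℝ) = b * ((baseAngle (tt j) (f j) + m) / cOf (tt j) b₀) - ratOf (tt j) := by
    refine Filter.eventually_all.2 fun j => ?_
    by_cases hV : inV (tt j) b₀
    · filter_upwards [eventually_dvd_iff_exists (hu j) (ht j) (natAbs_dvd_dRT_right rr tt j) hV
        (hf j)] with b hb _ hbd using (hb hbd).2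
    · exact Filter.Eventually.of_forall fun _ hV' => absurd hV' hV
  filter_upwards [hR, hT, hJ] with b hbR hbT hbJ hb n
  induction n with
  | zero => simp [dvdCount]
  | succ n ih =>
    by_cases hdvd : ∃ j, (b : ℤ) ∣ (tt j).1 + (tt j).2 * (n : ℤ)
    swap
    · push Not at hdvd
      calc ∑ j, dvdCount (tt j) b (n + 1) = ∑ j, dvdCount (tt j) b n :=
            Finset.sum_congr rfl fun j _ => by rw [dvdCount_succ, if_neg (hdvd j), add_zero]
        _ ≤ ∑ i, dvdCount (rr i) b n := ih
        _ ≤ ∑ i, dvdCount (rr i) b (n + 1) :=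
            Finset.sum_le_sum fun i _ => by rw [dvdCount_succ]; exact Nat.le_add_right _ _
    · obtain ⟨j₀, hj₀⟩ := hdvd
      have hc := cOf_pos (hu j₀) b₀
      obtain ⟨m, hm⟩ := hbJ j₀
        ((inV_congr (natAbs_dvd_dRT_right rr tt j₀) hb).1 (inV_of_dvd hj₀)) hb n hj₀
      set k₀ := m % cOf (tt j₀) b₀
      have hk₀ : k₀ < cOf (tt j₀) b₀ := Nat.mod_lt m hc
      set l := m / cOf (tt j₀) b₀
      have hml : m = k₀ + cOf (tt j₀) b₀ * l := (Nat.mod_add_div _ _).symm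
      have hangle := cangle_jumpPt (hu j₀) a (f j₀) hk₀
      have hcR : (0 : ℝ) < cOf (tt j₀) b₀ := by exact_mod_cast hc
      have hnR : (n : ℝ) = b * (jumpAngle (tt j₀) b₀ (f j₀) k₀ + l) - ratOf (tt j₀) := by
        rw [hm, hml, jumpAngle]
        push_cast
        field_simp
        ring
      have hn : ∀ z : ℤ, z < ((n + 1 : ℕ) : ℤ) ↔
          (z : ℝ) < b * (cangle (jumpPt (tt j₀) b₀ a (f j₀) k₀) + l)
            - ((ratOf (tt j₀) : ℝ) - 1) := by
        intro z
        have h1 : (b : ℝ) * (cangle (jumpPt (tt j₀) b₀ a (f j₀) k₀) + l)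
            - ((ratOf (tt j₀) : ℝ) - 1) = ((n + 1 : ℕ) : ℤ) := by
          rw [hangle]
          push_cast
          linarith
        rw [h1, Int.cast_lt]
      have htie : ∀ (p : ℤ × ℤ) (ε : ℤ), ∀ k < cOf p b₀,
          jumpAngle p b₀ ε k = cangle (jumpPt (tt j₀) b₀ a (f j₀) k₀) →
          (∃ z : ℤ, b * cangle (jumpPt (tt j₀) b₀ a (f j₀) k₀) - (ratOf p : ℝ) = z) →
          ((ratOf (tt j₀) : ℝ) - 1 < ratOf p ↔
            jumpPt (tt j₀) b₀ a (f j₀) k₀ ≤ jumpPt p b₀ a ε k) := by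
        rintro p ε k - hk ⟨z, hz⟩
        rw [hangle] at hk hz
        refine jumpPt_le_jumpPt_iff (z := n - b * l - z) ha hk ?_
        push_cast
        linarith
      have hk₀' := Finset.mem_range.2 hk₀
      rw [Finset.sum_congr rfl fun i _ => hbR j₀ k₀ hk₀' i hb l _ hn (htie _ _),
        Finset.sum_congr rfl fun j _ => hbT j₀ k₀ hk₀' j hb l _ hn (htie _ _),
        Finset.sum_add_distrib, Finset.sum_add_distrib, ← Finset.sum_mul, ← Finset.sum_mul]
      exact add_le_add (Nat.mul_le_mul_right l hperiod) (h' _)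

/-- Theorem 5.6: efficient criterion for Laurent q-integrality. -/
theorem laurent_integrality_xi_criterion {v w : ℕ} (rr : Fin v → ℤ × ℤ) (tt : Fin w → ℤ × ℤ)
    (hs : ∀ i, (rr i).2 ≠ 0) (hu : ∀ j, (tt j).2 ≠ 0)
    (ht : ∀ j, ¬ IsNonPosInt (ratOf (tt j))) (hr : ∀ i, ¬ IsNonPosInt (ratOf (rr i))) :
    (∃ C : Polynomial ℤ, C ≠ 0 ∧ ∀ n : ℕ, IsIntLaurent (polyZ C ^ n * qHyp rr tt n)) ↔
      (∀ b : ℕ, 1 ≤ b → b ≤ dRT rr tt →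
        ∀ (e : Fin v → ℤ) (f : Fin w → ℤ),
          (∀ i, goodChoice (rr i) b (e i)) → (∀ j, goodChoice (tt j) b (f j)) →
            ∀ x : ℝ, 0 ≤ Xi rr tt b e f x) := by
  have hd := dRT_pos hs hu
  rw [exists_isIntLaurent_iff_eventually_dvdCount rr tt hs hu ht hr]
  constructor
  · intro h b₀ _ _ e f he hf x
    refine Xi_nonneg_of_frequently hs hu ht hr he hf ?_ x
    exact (Nat.frequently_modEq hd.ne' b₀).and_eventually h
  · intro h
    choose e he using fun (b₀ : ℕ) (i : Fin v) => exists_goodChoice (hs i) b₀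
    choose f hf using fun (b₀ : ℕ) (j : Fin w) => exists_goodChoice (hu j) b₀
    have hE := (Filter.eventually_all_finset (Finset.Icc 1 (dRT rr tt))).2 fun b₀ hb₀ =>
      eventually_dvdCount_le_of_Xi_nonneg hs hu ht hr (he b₀) (hf b₀)
        (h b₀ (Finset.mem_Icc.1 hb₀).1 (Finset.mem_Icc.1 hb₀).2 _ _ (he b₀) (hf b₀))
    filter_upwards [hE] with b hb
    have hlt := Nat.mod_lt b hd
    by_cases h0 : b % dRT rr tt = 0
    · exact hb _ (Finset.mem_Icc.2 ⟨hd, le_rfl⟩)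
        ((Nat.modEq_zero_iff_dvd.2 (Nat.dvd_of_mod_eq_zero h0)).trans
          (Nat.modEq_zero_iff_dvd.2 dvd_rfl).symm)
    · exact hb _ (Finset.mem_Icc.2 ⟨Nat.pos_of_ne_zero h0, hlt.le⟩) (Nat.mod_modEq _ _).symm
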